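/- Fix n ≥ 1, write 𝟎 = 0⋯0 and 𝟏 = 0⋯01 in {0,1}^n, and suppose a coloring c of the vertices of AQ_n has the property that for any two vertices x = x_1⋯x_n and y = y_1⋯y_n with x_n ≠ y_n and with x, y both different from 𝟎 and 𝟏, we have c(x) ≠ c(y). If π is an automorphism of AQ_n that preserves c (i.e., c(π v) = c(v) for all v) and fixes both 𝟎 and 𝟏, then π is the identity automorphism. -/

import Mathlib

/-- The `n`-dimensional augmented cube: vertices are `{0,1}^n`; distinct vertices `a`, `b`
are adjacent iff either (1) they differ in exactly one coordinate `l`, or (2) there is an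
`l` such that they agree on all coordinates before `l` and differ on all coordinates from
`l` on. -/
def AQ (n : ℕ) : SimpleGraph (Fin n → Bool) where
  Adj a b := (∃ l, a l ≠ b l ∧ ∀ i, i ≠ l → a i = b i) ∨
             (∃ l, (∀ i, i < l → a i = b i) ∧ ∀ i, l ≤ i → a i ≠ b i)
  symm := by
    constructor
    rintro a b (⟨l, h1, h2⟩ | ⟨l, h1, h2⟩)
    · exact Or.inl ⟨l, h1.symm, fun i hi => (h2 i hi).symm⟩
    · exact Or.inr ⟨l, fun i hi => (h1 i hi).symm, fun i hi => (h2 i hi).symm⟩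
  loopless := by
    constructor
    rintro a (⟨l, h1, _⟩ | ⟨l, _, h2⟩)
    · exact h1 rfl
    · exact h2 l le_rfl rfl

/-- A permutation of the vertices is an automorphism of `G` iff it preserves adjacency. -/
def IsAuto {V : Type*} (G : SimpleGraph V) (π : Equiv.Perm V) : Prop :=
  ∀ v w, G.Adj (π v) (π w) ↔ G.Adj v w

/-!
Let `π` preserve the last coordinate. On each of the two halves `{x | x_n = b}` the augmented cube
is a hypercube, so `π` preserves the Hamming distance between vertices of the same half. The edges
between the halves join vertices which differ exactly on a final segment of coordinates, so the
neighbors of `𝟎` in the half of `𝟏`, and of `𝟏` in the half of `𝟎`, form in each half a staircase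
of `n` vertices whose distances to the fixed vertex of that half are `0, 1, …, n - 1`. Hence `π`
fixes the staircases pointwise. Two consecutive steps of a staircase differ in a single coordinate,
and comparing the distances of `x` to both reads off that coordinate of `x`; so `π` fixes every `x`.
Finally, the coloring forces `π` to preserve the last coordinate.
-/

section Hamming

variable {ι : Type*} [Fintype ι] {β : ι → Type*} [∀ i, DecidableEq (β i)] {x y : ∀ i, β i}

lemma hammingDist_eq_one_iff :
    hammingDist x y = 1 ↔ ∃ l, x l ≠ y l ∧ ∀ i, i ≠ l → x i = y i := by
  simp only [hammingDist, Finset.card_eq_one, Finset.eq_singleton_iff_unique_mem,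
    Finset.mem_filter_univ, not_imp_comm, ne_eq]

lemma hammingDist_eq_hammingDist_update_add_one [DecidableEq ι] {i : ι} (h : x i ≠ y i) :
    hammingDist x y = hammingDist x (Function.update y i (x i)) + 1 := by
  have hfilter : ({j | x j ≠ y j} : Finset ι) =
      insert i ({j | x j ≠ Function.update y i (x i) j} : Finset ι) := by
    ext j
    obtain rfl | hj := eq_or_ne j i <;> simp [*]
  rw [hammingDist, hfilter, Finset.card_insert_of_notMem (by simp), hammingDist]

lemma apply_eq_of_hammingDist_update_eq [DecidableEq ι] (v : ∀ i, β i) {i : ι}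
    (h : ∀ a, hammingDist x (Function.update v i a) = hammingDist y (Function.update v i a)) :
    x i = y i := by
  by_contra hne
  have hx := hammingDist_eq_hammingDist_update_add_one
    (x := x) (y := Function.update v i (y i)) (i := i) (by simpa using hne)
  have hy := hammingDist_eq_hammingDist_update_add_one
    (x := y) (y := Function.update v i (x i)) (i := i) (by simpa using Ne.symm hne)
  rw [Function.update_idem] at hx hy
  have hxi := h (x i)
  have hyi := h (y i)
  omega

lemma hammingDist_map_le_of_apply_eq {κ : Type*} [Fintype κ] {γ : κ → Type*}
    [∀ k, DecidableEq (γ k)] {f : (∀ i, β i) → ∀ k, γ k} {j : ι}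
    (hf : ∀ x y, x j = y j → hammingDist x y = 1 → hammingDist (f x) (f y) ≤ 1)
    (hxy : x j = y j) : hammingDist (f x) (f y) ≤ hammingDist x y := by
  classical
  induction hd : hammingDist x y generalizing y with
  | zero => simp [hammingDist_eq_zero.mp hd]
  | succ d ih =>
    have hne : x ≠ y := by
      rintro rfl
      simp at hd
    obtain ⟨i, hi⟩ := Function.ne_iff.mp hne
    have hij : j ≠ i := by
      rintro rfl
      exact hi hxy
    let z := Function.update y i (x i)
    have hzj : z j = y j := Function.update_of_ne hij ..
    have hxz : hammingDist x z = d := by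
      rw [hammingDist_eq_hammingDist_update_add_one hi] at hd
      exact Nat.succ.inj hd
    have hzy : hammingDist z y = 1 :=
      hammingDist_eq_one_iff.mpr ⟨i, by simpa [z] using hi, fun k hk ↦ Function.update_of_ne hk ..⟩
    calc hammingDist (f x) (f y)
        ≤ hammingDist (f x) (f z) + hammingDist (f z) (f y) := hammingDist_triangle ..
      _ ≤ d + 1 := Nat.add_le_add (ih (hxy.trans hzj.symm) hxz) (hf z y hzj hzy)

end Hamming

lemma apply_perm_eq_of_coloring_separates {V α β : Type*} {π : Equiv.Perm V} {c : V → α} {p : V → β}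
    {S : Set V} (hsep : ∀ x y, x ∉ S → y ∉ S → p x ≠ p y → c x ≠ c y)
    (hpres : ∀ v, c (π v) = c v) (hfix : ∀ v ∈ S, π v = v) (v : V) : p (π v) = p v := by
  by_cases hv : v ∈ S
  · rw [hfix v hv]
  · have hπv : π v ∉ S := fun h ↦ hv (π.injective (hfix _ h) ▸ h)
    exact by_contra fun hne ↦ hsep _ _ hπv hv hne (hpres v)

lemma IsAuto.symm {V : Type*} {G : SimpleGraph V} {π : Equiv.Perm V} (hπ : IsAuto G π) :
    IsAuto G π.symm := fun v w ↦ by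
  simpa using (hπ (π.symm v) (π.symm w)).symm

namespace AQ

variable {m : ℕ} {x y : Fin (m + 1) → Bool}

lemma adj_iff_hammingDist_eq_one (h : x (Fin.last m) = y (Fin.last m)) :
    (AQ (m + 1)).Adj x y ↔ hammingDist x y = 1 := by
  rw [hammingDist_eq_one_iff]
  exact or_iff_left fun ⟨l, _, hne⟩ ↦ hne _ l.le_last h

lemma adj_iff_exists_ne_iff_le (h : x (Fin.last m) ≠ y (Fin.last m)) :
    (AQ (m + 1)).Adj x y ↔ ∃ l, ∀ i, x i ≠ y i ↔ l ≤ i := by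
  constructor
  · rintro (⟨l, -, heq⟩ | ⟨l, heq, hne⟩)
    · obtain rfl : Fin.last m = l := by_contra fun hl ↦ h (heq _ hl)
      refine ⟨Fin.last m, fun i ↦ ?_⟩
      rw [Fin.last_le_iff]
      exact ⟨not_imp_comm.mp (heq i), fun hi ↦ hi ▸ h⟩
    · exact ⟨l, fun i ↦ ⟨fun hi ↦ not_lt.mp fun hlt ↦ hi (heq i hlt), hne i⟩⟩
  · rintro ⟨l, hl⟩
    exact .inr ⟨l, fun i hi ↦ not_ne_iff.mp fun hne ↦ ((hl i).mp hne).not_gt hi,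
      fun i ↦ (hl i).mpr⟩

/-- The vertex `0⋯01⋯1b` whose block of ones begins at coordinate `l` and whose last coordinate is
overwritten by `b`. For fixed `b` these are the neighbors of `0⋯0(1-b)` with last coordinate `b`;
for `l = Fin.last m` one gets the vertex `0⋯0b`, that is, `𝟎` or `𝟏`. -/
def staircase (b : Bool) (l : Fin (m + 1)) : Fin (m + 1) → Bool :=
  Fin.snoc (α := fun _ ↦ Bool) (fun j ↦ decide (l ≤ j.castSucc)) b

@[simp]
lemma staircase_apply_last (b : Bool) (l : Fin (m + 1)) : staircase b l (Fin.last m) = b :=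
  Fin.snoc_last ..

@[simp]
lemma staircase_apply_castSucc (b : Bool) (l : Fin (m + 1)) (j : Fin m) :
    staircase b l j.castSucc = decide (l ≤ j.castSucc) :=
  Fin.snoc_castSucc ..

lemma staircase_false_last : staircase false (Fin.last m) = fun _ ↦ false := by
  ext i
  cases i using Fin.lastCases <;> simp [Fin.last_le_iff]

lemma staircase_true_last :
    staircase true (Fin.last m) = fun i : Fin (m + 1) ↦ decide ((i : ℕ) = m) := by
  ext i
  cases i using Fin.lastCases with
  | last => simp
  | cast j => simp [Fin.last_le_iff, j.isLt.ne]

lemma hammingDist_staircase_last (b : Bool) (l : Fin (m + 1)) :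
    hammingDist (staircase b l) (staircase b (Fin.last m)) = m - l := by
  have hfilter : ({i | staircase b l i ≠ staircase b (Fin.last m) i} : Finset (Fin (m + 1))) =
      Finset.Ico l (Fin.last m) := by
    ext i
    cases i using Fin.lastCases <;> simp [Fin.last_le_iff, Fin.castSucc_lt_last]
  rw [hammingDist, hfilter, Fin.card_Ico, Fin.val_last]

lemma adj_staircase_last_iff {b : Bool} (hx : x (Fin.last m) = b) :
    (AQ (m + 1)).Adj x (staircase (!b) (Fin.last m)) ↔ ∃ l, x = staircase b l := by
  rw [adj_iff_exists_ne_iff_le (by simp [hx])]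
  refine exists_congr fun l ↦ ?_
  simp [funext_iff, Fin.forall_fin_succ', hx, Fin.le_last, Fin.last_le_iff,
    Bool.eq_iff_iff (b := decide _)]

lemma update_staircase_castSucc (b : Bool) (j : Fin m) (a : Bool) :
    Function.update (staircase b j.castSucc) j.castSucc a =
      staircase b (if a then j.castSucc else j.succ) := by
  ext i
  cases i using Fin.lastCases with
  | last => simp [Function.update_of_ne (Fin.castSucc_lt_last j).ne']
  | cast k =>
    obtain rfl | hk := eq_or_ne k j
    · cases a <;> simp
    · have hle : j.castSucc ≤ k.castSucc ↔ j.succ ≤ k.castSucc := by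
        rw [Fin.succ_le_castSucc_iff, Fin.castSucc_le_castSucc_iff]
        exact ⟨fun h ↦ h.lt_of_ne hk.symm, le_of_lt⟩
      cases a <;> simp [hk, hle]

lemma eq_of_hammingDist_staircase_eq {b : Bool} (hlast : x (Fin.last m) = y (Fin.last m))
    (h : ∀ l, hammingDist x (staircase b l) = hammingDist y (staircase b l)) : x = y := by
  ext i
  cases i using Fin.lastCases with
  | last => exact hlast
  | cast j =>
    refine apply_eq_of_hammingDist_update_eq (staircase b j.castSucc) fun a ↦ ?_
    rw [update_staircase_castSucc, h]

variable {π : Equiv.Perm (Fin (m + 1) → Bool)}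

lemma hammingDist_map_le (hπ : IsAuto (AQ (m + 1)) π)
    (hlast : ∀ v, π v (Fin.last m) = v (Fin.last m)) (hxy : x (Fin.last m) = y (Fin.last m)) :
    hammingDist (π x) (π y) ≤ hammingDist x y := by
  refine hammingDist_map_le_of_apply_eq (fun v w hvw hd ↦ Eq.le ?_) hxy
  rwa [← adj_iff_hammingDist_eq_one (by rw [hlast, hlast, hvw]), hπ,
    adj_iff_hammingDist_eq_one hvw]

lemma hammingDist_map (hπ : IsAuto (AQ (m + 1)) π)
    (hlast : ∀ v, π v (Fin.last m) = v (Fin.last m)) (hxy : x (Fin.last m) = y (Fin.last m)) :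
    hammingDist (π x) (π y) = hammingDist x y := by
  have hlast_symm (v) : π.symm v (Fin.last m) = v (Fin.last m) := by
    simpa using (hlast (π.symm v)).symm
  refine (hammingDist_map_le hπ hlast hxy).antisymm ?_
  have hπxy : π x (Fin.last m) = π y (Fin.last m) := by rw [hlast, hlast, hxy]
  simpa using hammingDist_map_le hπ.symm hlast_symm hπxy

lemma map_staircase (hπ : IsAuto (AQ (m + 1)) π)
    (hlast : ∀ v, π v (Fin.last m) = v (Fin.last m))
    (hfix : ∀ b, π (staircase b (Fin.last m)) = staircase b (Fin.last m))
    (b : Bool) (l : Fin (m + 1)) : π (staircase b l) = staircase b l := by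
  obtain ⟨k, hk⟩ : ∃ k, π (staircase b l) = staircase b k := by
    rw [← adj_staircase_last_iff (by simp [hlast]), ← hfix, hπ, adj_staircase_last_iff (by simp)]
    exact ⟨l, rfl⟩
  have hdist : m - (k : ℕ) = m - l := by
    rw [← hammingDist_staircase_last b k, ← hammingDist_staircase_last b l, ← hk]
    nth_rw 1 [← hfix b]
    exact hammingDist_map hπ hlast (by simp)
  obtain rfl : k = l := by omega
  exact hk

theorem eq_one_of_apply_last (hπ : IsAuto (AQ (m + 1)) π)
    (hlast : ∀ v, π v (Fin.last m) = v (Fin.last m))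
    (hfix : ∀ b, π (staircase b (Fin.last m)) = staircase b (Fin.last m)) : π = 1 := by
  refine Equiv.ext fun x ↦ eq_of_hammingDist_staircase_eq (b := x (Fin.last m)) (hlast x) fun l ↦ ?_
  calc hammingDist (π x) (staircase (x (Fin.last m)) l)
      = hammingDist (π x) (π (staircase (x (Fin.last m)) l)) := by
        rw [map_staircase hπ hlast hfix]
    _ = hammingDist x (staircase (x (Fin.last m)) l) := hammingDist_map hπ hlast (by simp)

end AQ

theorem stmt_12 (n : ℕ) (hn : 1 ≤ n) {α : Type*} (c : (Fin n → Bool) → α)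
    (hc : ∀ x y : Fin n → Bool,
      x ≠ (fun _ => false) → x ≠ (fun i : Fin n => decide ((i : ℕ) = n - 1)) →
      y ≠ (fun _ => false) → y ≠ (fun i : Fin n => decide ((i : ℕ) = n - 1)) →
      x ⟨n - 1, by omega⟩ ≠ y ⟨n - 1, by omega⟩ → c x ≠ c y)
    (π : Equiv.Perm (Fin n → Bool)) (hauto : IsAuto (AQ n) π)
    (hpres : ∀ v, c (π v) = c v)
    (h0 : π (fun _ => false) = fun _ => false)
    (h1 : π (fun i : Fin n => decide ((i : ℕ) = n - 1)) = fun i : Fin n => decide ((i : ℕ) = n - 1)) :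
    π = 1 := by
  obtain ⟨m, rfl⟩ := Nat.exists_eq_add_of_le' hn
  have hlast : ∀ v, π v (Fin.last m) = v (Fin.last m) := by
    refine apply_perm_eq_of_coloring_separates (p := fun v : Fin (m + 1) → Bool ↦ v (Fin.last m))
      (S := {fun _ ↦ false, fun i ↦ decide (i.val = m)}) (fun x y hx hy ↦ ?_) hpres ?_
    · simp only [Set.mem_insert_iff, Set.mem_singleton_iff, not_or] at hx hy
      exact hc x y hx.1 hx.2 hy.1 hy.2
    · rintro v (rfl | rfl)
      exacts [h0, h1]
  refine AQ.eq_one_of_apply_last hauto hlast fun b ↦ ?_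
  cases b
  · rw [AQ.staircase_false_last, h0]
  · rw [AQ.staircase_true_last]
    exact h1
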